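/- Let Φ be an Orlicz function with 1 < p_Φ ≤ q_Φ < ∞, let d ≥ 1, and let f : 𝕋 → M_d(ℂ) be a function with entrywise integrable entries such that ∫_𝕋 Tr Φ(|f(z)|) dm(z) < ∞ and whose Fourier coefficients satisfy f̂(k) = 0 for all integers k < 0. Then for every ε > 0 there exist functions g, h : 𝕋 → M_d(ℂ) with entrywise integrable entries satisfying ĝ(k) = 0 and ĥ(k) = 0 for all k < 0, such that f(z) = g(z) h(z) for m-almost every z ∈ 𝕋 and max{ ∫_𝕋 Tr Φ(g(z)* g(z)) dm(z), ∫_𝕋 Tr Φ(h(z) h(z)*) dm(z) } ≤ ∫_𝕋 Tr Φ(|f(z)|) dm(z) + ε. -/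

import Mathlib

/-!
The factorization comes from an explicit modulus and a unitary correction. Let
`w = max (|f|, δ)` by functional calculus, with `δ > 0` so small that `d Φ(δ) ≤ ε`, and put
`a = w ^ (1/2)`, `b = w ^ (-1/2)`. Since `f` is integrable and `w ≥ δ`, the functions `a`, `b` and
`f b` are square integrable, and `f = (f b) a`. For any unitary valued `Θ` the functions
`g = f b Θ` and `h = Θᴴ a` satisfy `f = g h`; moreover `gᴴ g` is unitarily equivalent to
`|f|² / w ≤ |f|` and `h hᴴ` to `w`, so that `Tr Φ(gᴴ g) ≤ Tr Φ(|f|)` and, because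
`Φ(max (s, δ)) ≤ Φ(s) + Φ(δ)`, also `Tr Φ(h hᴴ) ≤ Tr Φ(|f|) + d Φ(δ)`.

It remains to choose `Θ` so that `g` and `h` are analytic (`exists_unitary_factor`). In
`L²(𝕋, ℂᵈ)` let `M` be the closed span of the `z ^ m a e_j`, `m ≥ 0`. The components of the `a e_j`
orthogonal to `z M` are linearly independent, as one sees by pairing with the rows of `b`, so
the wandering subspace `M ⊖ z M` contains `d` orthonormal vectors; these are the columns of `Θ`
(`exists_orthonormal_wandering`). Pointwise inner products of elements of `M ⊖ z M` have
vanishing nonzero Fourier coefficients, hence are constant by uniqueness of Fourier coefficients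
in `L¹` (`ae_inner_eq_const`, `ae_eq_zero_of_fourier`), so `Θ` is unitary almost everywhere. The
columns of `Θ` being orthogonal to `z M` says that `Θᴴ a` is analytic. Analyticity of
`f = (f b) a` says that the conjugated rows of `f b` are orthogonal to `z M`, which contains `z ^ m`
times the columns of `Θ` for `m ≥ 1`; so `f b Θ` is analytic too.
-/

open MeasureTheory Filter Set Finset Matrix ProbabilityTheory
open scoped ENNReal

/-- An Orlicz function: continuous, increasing and convex on `[0, ∞)`, vanishing at `0`
and tending to `∞` at `∞`. -/
structure IsOrliczFunction (Φ : ℝ → ℝ) : Prop where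
  continuousOn : ContinuousOn Φ (Set.Ici 0)
  monotoneOn : MonotoneOn Φ (Set.Ici 0)
  convexOn : ConvexOn ℝ (Set.Ici 0) Φ
  map_zero : Φ 0 = 0
  tendsto_atTop : Filter.Tendsto Φ Filter.atTop Filter.atTop

/-- Concrete form of the lower Matuszewska–Orlicz index condition `p < p_Φ`:
`∫₀ᵗ Φ(s) s^(−p−1) ds ≤ C₀ t^(−p) Φ(t)` for all `t > 0`. -/
def OrliczLowerIndex (Φ : ℝ → ℝ) (p C₀ : ℝ) : Prop :=
  ∀ t : ℝ, 0 < t → (∫ s in Set.Ioo (0 : ℝ) t, Φ s * s ^ (-p - 1)) ≤ C₀ * t ^ (-p) * Φ t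

/-- Concrete form of the upper Matuszewska–Orlicz index condition `q_Φ < q`:
`∫ₜ^∞ Φ(s) s^(−q−1) ds ≤ C₀ t^(−q) Φ(t)` for all `t > 0`. -/
def OrliczUpperIndex (Φ : ℝ → ℝ) (q C₀ : ℝ) : Prop :=
  ∀ t : ℝ, 0 < t → (∫ s in Set.Ioi t, Φ s * s ^ (-q - 1)) ≤ C₀ * t ^ (-q) * Φ t

/-- For a Hermitian matrix `B`, `Tr Φ(B) = Σᵢ Φ(λᵢ(B))` (functional calculus on the
eigenvalues); junk value `0` if `B` is not Hermitian. -/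
noncomputable def trPhiHerm (Φ : ℝ → ℝ) {d : ℕ} (B : Matrix (Fin d) (Fin d) ℂ) : ℝ :=
  letI := Classical.propDecidable B.IsHermitian
  if hB : B.IsHermitian then ∑ i, Φ (hB.eigenvalues i) else 0

/-- For a positive semidefinite matrix `B`, `Tr Φ(B^(1/2)) = Σᵢ Φ(√λᵢ(B))`;
junk value `0` if `B` is not Hermitian. -/
noncomputable def trPhiSqrt (Φ : ℝ → ℝ) {d : ℕ} (B : Matrix (Fin d) (Fin d) ℂ) : ℝ :=
  letI := Classical.propDecidable B.IsHermitian
  if hB : B.IsHermitian then ∑ i, Φ (Real.sqrt (hB.eigenvalues i)) else 0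

/-- `Tr Φ(|A|) = Σᵢ Φ(sᵢ(A))` where `sᵢ(A)` are the singular values of `A`,
i.e. the square roots of the eigenvalues of `Aᴴ * A`. -/
noncomputable def trPhiAbs (Φ : ℝ → ℝ) {d : ℕ} (A : Matrix (Fin d) (Fin d) ℂ) : ℝ :=
  trPhiSqrt Φ (Aᴴ * A)

instance : Fact (0 < 2 * Real.pi) := ⟨Real.two_pi_pos⟩

/-! ### Functional calculus of `Aᴴ * A` -/

section MatrixPart

variable {d : ℕ}

open scoped Matrix.Norms.L2Operator in
lemma continuous_cfc_conjTranspose_mul_self (c : ℝ → ℝ) (hc : Continuous c) :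
    Continuous fun A : Matrix (Fin d) (Fin d) ℂ => cfc c (Aᴴ * A) := by
  refine Continuous.cfc_of_mem_nhdsSet (s := Set.univ) c Filter.univ_mem ?_ ?_ hc.continuousOn
  · fun_prop
  · intro A
    exact isHermitian_conjTranspose_mul_self A

lemma isHermitian_cfc (c : ℝ → ℝ) (B : Matrix (Fin d) (Fin d) ℂ) :
    (cfc c B).IsHermitian :=
  cfc_predicate (R := ℝ) (p := IsSelfAdjoint) c B

/-- The eigenvalues of a matrix with the characteristic polynomial of `cfc c B` are, with
multiplicity, the values of `c` at the eigenvalues of `B`. -/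
lemma sum_eigenvalues_of_charpoly_eq {B D : Matrix (Fin d) (Fin d) ℂ} (hB : B.IsHermitian)
    (hD : D.IsHermitian) (c Ψ : ℝ → ℝ) (h : D.charpoly = (cfc c B).charpoly) :
    ∑ i, Ψ (hD.eigenvalues i) = ∑ i, Ψ (c (hB.eigenvalues i)) := by
  have h1 := hD.roots_charpoly_eq_eigenvalues
  rw [h, hB.charpoly_cfc_eq, Polynomial.roots_prod _ _
    (by simp [Finset.prod_ne_zero_iff, Polynomial.X_sub_C_ne_zero])] at h1
  simp only [Polynomial.roots_X_sub_C, Multiset.bind_singleton] at h1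
  have h2 := congrArg (fun s => (s.map (fun z : ℂ => Ψ z.re)).sum) h1
  simpa [Multiset.map_map, -Fin.univ_val_map] using h2.symm

lemma trPhiHerm_conj_cfc {B U : Matrix (Fin d) (Fin d) ℂ} (hB : B.IsHermitian)
    (hU : Uᴴ * U = 1) (c Φ : ℝ → ℝ) :
    trPhiHerm Φ (Uᴴ * cfc c B * U) = ∑ i, Φ (c (hB.eigenvalues i)) := by
  have hD : (Uᴴ * cfc c B * U).IsHermitian :=
    isHermitian_conjTranspose_mul_mul U (isHermitian_cfc c B)
  unfold trPhiHerm
  rw [dif_pos hD]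
  refine sum_eigenvalues_of_charpoly_eq hB hD c Φ ?_
  rw [Matrix.charpoly_mul_comm, ← Matrix.mul_assoc, mul_eq_one_comm.mp hU, one_mul]

lemma trPhiAbs_eq (Φ : ℝ → ℝ) (A : Matrix (Fin d) (Fin d) ℂ) :
    trPhiAbs Φ A
      = ∑ i, Φ (√((isHermitian_conjTranspose_mul_self A).eigenvalues i)) := by
  unfold trPhiAbs trPhiSqrt
  rw [dif_pos (isHermitian_conjTranspose_mul_self A)]

open scoped ComplexOrder in
lemma eigenvalues_nonneg (A : Matrix (Fin d) (Fin d) ℂ) (i : Fin d) :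
    0 ≤ (isHermitian_conjTranspose_mul_self A).eigenvalues i :=
  (posSemidef_conjTranspose_mul_self A).eigenvalues_nonneg i

lemma trace_conjTranspose_mul_self_eq (A : Matrix (Fin d) (Fin d) ℂ) :
    (Aᴴ * A).trace = ((∑ j, ∑ i, ‖A i j‖ ^ 2 : ℝ) : ℂ) := by
  simp only [Matrix.trace, Matrix.diag, Matrix.mul_apply, conjTranspose_apply]
  push_cast
  refine Finset.sum_congr rfl fun j _ => Finset.sum_congr rfl fun i _ => ?_
  exact Complex.conj_mul' _

lemma sum_norm_sq_eq_sum_eigenvalues (A : Matrix (Fin d) (Fin d) ℂ) :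
    ∑ j, ∑ i, ‖A i j‖ ^ 2 = ∑ i, (isHermitian_conjTranspose_mul_self A).eigenvalues i := by
  have htr := (isHermitian_conjTranspose_mul_self A).trace_eq_sum_eigenvalues
  rw [trace_conjTranspose_mul_self_eq] at htr
  have := congrArg Complex.re htr
  simpa [-Complex.ofReal_sum, -Complex.ofReal_pow, Complex.re_sum] using this

/-- The singular values are dominated by the entrywise `ℓ¹` norm. -/
lemma sqrt_eigenvalues_le (A : Matrix (Fin d) (Fin d) ℂ) (k : Fin d) :
    √((isHermitian_conjTranspose_mul_self A).eigenvalues k) ≤ ∑ j, ∑ i, ‖A i j‖ := by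
  have h0 : (0 : ℝ) ≤ ∑ j, ∑ i, ‖A i j‖ := by positivity
  rw [Real.sqrt_le_left h0]
  calc _ ≤ ∑ i, (isHermitian_conjTranspose_mul_self A).eigenvalues i :=
        Finset.single_le_sum (f := (isHermitian_conjTranspose_mul_self A).eigenvalues)
          (fun i _ => eigenvalues_nonneg A i) (Finset.mem_univ k)
    _ = ∑ j, ∑ i, ‖A i j‖ ^ 2 := (sum_norm_sq_eq_sum_eigenvalues A).symm
    _ ≤ ∑ j, (∑ i, ‖A i j‖) ^ 2 := Finset.sum_le_sum fun j _ =>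
        Finset.sum_sq_le_sq_sum_of_nonneg fun i _ => norm_nonneg _
    _ ≤ _ := Finset.sum_sq_le_sq_sum_of_nonneg fun j _ => by positivity

/-- Entries of a matrix `D` with `Dᴴ * D = c(Aᴴ * A)` are controlled by the growth of `c`. -/
lemma norm_entry_sq_le {A D : Matrix (Fin d) (Fin d) ℂ} {c : ℝ → ℝ} {K : ℝ}
    (hD : Dᴴ * D = cfc c (Aᴴ * A)) (hc : ∀ x, 0 ≤ x → c x ≤ K + √x) (i j : Fin d) :
    ‖D i j‖ ^ 2 ≤ d * (K + ∑ j, ∑ i, ‖A i j‖) := by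
  have hB := isHermitian_conjTranspose_mul_self A
  have hDD := isHermitian_conjTranspose_mul_self D
  have h1 := sum_eigenvalues_of_charpoly_eq hB hDD c id (by rw [hD])
  calc ‖D i j‖ ^ 2 ≤ ∑ i, ‖D i j‖ ^ 2 :=
        Finset.single_le_sum (f := fun i => ‖D i j‖ ^ 2) (fun i _ => by positivity)
          (Finset.mem_univ i)
    _ ≤ ∑ j, ∑ i, ‖D i j‖ ^ 2 :=
        Finset.single_le_sum (f := fun j => ∑ i, ‖D i j‖ ^ 2) (fun i _ => by positivity)
          (Finset.mem_univ j)
    _ = ∑ i, c (hB.eigenvalues i) := by rw [sum_norm_sq_eq_sum_eigenvalues]; exact h1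
    _ ≤ ∑ i : Fin d, (K + ∑ j, ∑ i, ‖A i j‖) := Finset.sum_le_sum fun k _ =>
        (hc _ (eigenvalues_nonneg A k)).trans (by gcongr; exact sqrt_eigenvalues_le A k)
    _ = _ := by simp [mul_add]

end MatrixPart
/-! ### Uniqueness of Fourier coefficients of integrable functions -/

/-- The normalized Haar measure on the circle. -/
local notation "μ𝕋" => (AddCircle.haarAddCircle (T := 2 * Real.pi))

lemma integral_continuous_mul_eq_zero {F : AddCircle (2 * Real.pi) → ℂ} (hF : Integrable F μ𝕋)
    (h : ∀ n : ℤ, ∫ t, fourier n t * F t ∂μ𝕋 = 0) (u : C(AddCircle (2 * Real.pi), ℂ)) :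
    ∫ t, u t * F t ∂μ𝕋 = 0 := by
  have hint : ∀ u : C(AddCircle (2 * Real.pi), ℂ), Integrable (fun t => u t * F t) μ𝕋 := fun u =>
    hF.bdd_mul u.continuous.aestronglyMeasurable (c := ‖u‖)
      (Eventually.of_forall fun t => u.norm_coe_le_norm t)
  let L₀ : C(AddCircle (2 * Real.pi), ℂ) →ₗ[ℂ] ℂ :=
    { toFun := fun u => ∫ t, u t * F t ∂μ𝕋
      map_add' := fun u v => by
        simp only [ContinuousMap.add_apply, add_mul]
        exact integral_add (hint u) (hint v)
      map_smul' := fun c u => by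
        simp only [ContinuousMap.smul_apply, smul_eq_mul, mul_assoc, RingHom.id_apply]
        exact integral_const_mul _ _ }
  let L : C(AddCircle (2 * Real.pi), ℂ) →L[ℂ] ℂ := L₀.mkContinuous (∫ t, ‖F t‖ ∂μ𝕋) fun u => by
    calc ‖∫ t, u t * F t ∂μ𝕋‖ ≤ ∫ t, ‖u‖ * ‖F t‖ ∂μ𝕋 :=
          norm_integral_le_of_norm_le (hF.norm.const_mul _) (Eventually.of_forall fun t => by
            rw [norm_mul]; gcongr; exact u.norm_coe_le_norm t)
      _ = _ := by rw [integral_const_mul, mul_comm]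
  have hspan : Submodule.span ℂ (Set.range (fourier (T := 2 * Real.pi))) ≤ L.ker := by
    rw [Submodule.span_le]
    rintro _ ⟨n, rfl⟩
    exact h n
  have htop := Submodule.topologicalClosure_minimal _ hspan L.isClosed_ker
  rw [span_fourier_closure_eq_top] at htop
  exact htop (Submodule.mem_top (x := u))

/-- An integrable function on the circle all of whose Fourier coefficients vanish is zero. -/
lemma ae_eq_zero_of_fourier {F : AddCircle (2 * Real.pi) → ℂ} (hF : Integrable F μ𝕋)
    (h : ∀ n : ℤ, ∫ t, fourier n t * F t ∂μ𝕋 = 0) : F =ᵐ[μ𝕋] 0 := by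
  refine ae_eq_zero_of_forall_setIntegral_isClosed_eq_zero hF fun s hs => ?_
  have hlim : Tendsto (fun n => ∫ t, ((hs.apprSeq n t : ℝ) : ℂ) * F t ∂μ𝕋) atTop
      (nhds (∫ t, s.indicator F t ∂μ𝕋)) := by
    refine tendsto_integral_of_dominated_convergence (fun t => ‖F t‖) (fun n => ?_) hF.norm
      (fun n => Eventually.of_forall fun t => ?_) (Eventually.of_forall fun t => ?_)
    · refine AEStronglyMeasurable.mul (Continuous.aestronglyMeasurable ?_) hF.1
      have := (hs.apprSeq n).continuous
      fun_prop
    · rw [norm_mul]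
      have h1 : (hs.apprSeq n t : ℝ) ≤ 1 := by
        exact_mod_cast HasOuterApproxClosed.apprSeq_apply_le_one hs n t
      have h2 : ‖((hs.apprSeq n t : ℝ) : ℂ)‖ ≤ 1 := by simpa using h1
      exact mul_le_of_le_one_left (norm_nonneg _) h2
    · have h1 := (tendsto_pi_nhds.mp (HasOuterApproxClosed.tendsto_apprSeq hs)) t
      have h2 : Tendsto (fun n => ((hs.apprSeq n t : ℝ) : ℂ)) atTop
          (nhds (((s.indicator (fun _ => (1 : NNReal)) t : NNReal) : ℝ) : ℂ)) :=
        ((Complex.continuous_ofReal.comp NNReal.continuous_coe).tendsto _).comp h1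
      have h3 := h2.mul_const (F t)
      by_cases hts : t ∈ s <;> simpa [hts] using h3
  rw [← integral_indicator hs.measurableSet]
  refine tendsto_nhds_unique hlim ?_
  have hz : ∀ n, ∫ t, ((hs.apprSeq n t : ℝ) : ℂ) * F t ∂μ𝕋 = 0 := fun n =>
    integral_continuous_mul_eq_zero hF h
      ⟨fun t => ((hs.apprSeq n t : ℝ) : ℂ), by
        have := (hs.apprSeq n).continuous
        fun_prop⟩
  simp [hz]

/-! ### The wandering subspace of an analytic lattice in `L²(𝕋, ℂᵈ)` -/

section Hilbert

variable {d : ℕ}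

/-- The class in `L²(𝕋, ℂᵈ)` of a function with square integrable coordinates. -/
noncomputable def vecL (v : AddCircle (2 * Real.pi) → Fin d → ℂ)
    (hv : ∀ i, MemLp (fun t => v t i) 2 μ𝕋) : Lp (EuclideanSpace ℂ (Fin d)) 2 μ𝕋 :=
  (MemLp.of_eval_piLp (f := fun t => WithLp.toLp 2 (v t)) hv).toLp _

lemma coeFn_vecL (v : AddCircle (2 * Real.pi) → Fin d → ℂ)
    (hv : ∀ i, MemLp (fun t => v t i) 2 μ𝕋) :
    ∀ᵐ t ∂μ𝕋, ∀ i, vecL v hv t i = v t i := by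
  filter_upwards [(MemLp.of_eval_piLp (f := fun t => WithLp.toLp 2 (v t)) hv).coeFn_toLp]
    with t ht i
  unfold vecL
  rw [ht]

lemma memLp_coord (x : Lp (EuclideanSpace ℂ (Fin d)) 2 μ𝕋) (i : Fin d) :
    MemLp (fun t => x t i) 2 μ𝕋 :=
  (Lp.memLp x).eval_piLp i

lemma inner_L2 (x y : Lp (EuclideanSpace ℂ (Fin d)) 2 μ𝕋) :
    inner ℂ x y = ∫ t, ∑ i, y t i * star (x t i) ∂μ𝕋 := by
  rw [L2.inner_def]
  rfl

lemma inner_vecL_left (v : AddCircle (2 * Real.pi) → Fin d → ℂ)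
    (hv : ∀ i, MemLp (fun t => v t i) 2 μ𝕋) (y : Lp (EuclideanSpace ℂ (Fin d)) 2 μ𝕋) :
    inner ℂ (vecL v hv) y = ∫ t, ∑ i, y t i * star (v t i) ∂μ𝕋 := by
  rw [inner_L2]
  refine integral_congr_ae ?_
  filter_upwards [coeFn_vecL v hv] with t ht
  simp only [ht]

lemma inner_vecL_right (v : AddCircle (2 * Real.pi) → Fin d → ℂ)
    (hv : ∀ i, MemLp (fun t => v t i) 2 μ𝕋) (x : Lp (EuclideanSpace ℂ (Fin d)) 2 μ𝕋) :
    inner ℂ x (vecL v hv) = ∫ t, ∑ i, v t i * star (x t i) ∂μ𝕋 := by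
  rw [inner_L2]
  refine integral_congr_ae ?_
  filter_upwards [coeFn_vecL v hv] with t ht
  simp only [ht]

lemma inner_vecL_vecL (u v : AddCircle (2 * Real.pi) → Fin d → ℂ)
    (hu : ∀ i, MemLp (fun t => u t i) 2 μ𝕋) (hv : ∀ i, MemLp (fun t => v t i) 2 μ𝕋) :
    inner ℂ (vecL u hu) (vecL v hv) = ∫ t, ∑ i, v t i * star (u t i) ∂μ𝕋 := by
  rw [inner_vecL_left]
  refine integral_congr_ae ?_
  filter_upwards [coeFn_vecL v hv] with t ht
  simp only [ht]

lemma norm_fourier_apply (m : ℤ) (t : AddCircle (2 * Real.pi)) : ‖fourier m t‖ = 1 := by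
  rw [fourier_apply]
  exact Circle.norm_coe _

lemma memLp_fourier_mul (m : ℤ) {u : AddCircle (2 * Real.pi) → ℂ} (hu : MemLp u 2 μ𝕋) :
    MemLp (fun t => fourier m t * u t) 2 μ𝕋 := by
  refine MemLp.of_le hu ?_ (Eventually.of_forall fun t => ?_)
  · exact (fourier m).continuous.aestronglyMeasurable.mul hu.1
  · rw [norm_mul, norm_fourier_apply, one_mul]

lemma memLp_star {u : AddCircle (2 * Real.pi) → ℂ} (hu : MemLp u 2 μ𝕋) :
    MemLp (fun t => star (u t)) 2 μ𝕋 :=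
  MemLp.of_le hu (continuous_star.comp_aestronglyMeasurable hu.1)
    (Eventually.of_forall fun t => by simp)

lemma star_fourier (m : ℤ) (t : AddCircle (2 * Real.pi)) :
    star (fourier m t) = fourier (-m) t :=
  fourier_neg.symm

lemma mem_span_orthogonal {E : Type*} [NormedAddCommGroup E] [InnerProductSpace ℂ E] {S : Set E}
    {x : E} (h : ∀ s ∈ S, inner ℂ s x = 0) : x ∈ (Submodule.span ℂ S)ᗮ := by
  have : Submodule.span ℂ S ≤ (Submodule.span ℂ {x})ᗮ :=
    Submodule.span_le.mpr fun s hs =>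
      Submodule.mem_orthogonal_singleton_iff_inner_left.mpr (h s hs)
  rw [Submodule.mem_orthogonal]
  intro u hu
  exact Submodule.mem_orthogonal_singleton_iff_inner_left.mp (this hu)

/-- The function `z ^ m • a e_j` in `L²(𝕋, ℂᵈ)`. -/
noncomputable def shiftCol (a : AddCircle (2 * Real.pi) → Matrix (Fin d) (Fin d) ℂ)
    (ha : ∀ i j, MemLp (fun t => a t i j) 2 μ𝕋) (m : ℤ) (j : Fin d) :
    Lp (EuclideanSpace ℂ (Fin d)) 2 μ𝕋 :=
  vecL (fun t i => fourier m t * a t i j) fun i => memLp_fourier_mul m (ha i j)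

/-- The span of `z ^ m • a e_j` for `m ≥ k`. -/
noncomputable def lattice (a : AddCircle (2 * Real.pi) → Matrix (Fin d) (Fin d) ℂ)
    (ha : ∀ i j, MemLp (fun t => a t i j) 2 μ𝕋) (k : ℤ) :
    Submodule ℂ (Lp (EuclideanSpace ℂ (Fin d)) 2 μ𝕋) :=
  Submodule.span ℂ {x | ∃ m j, k ≤ m ∧ x = shiftCol a ha m j}

lemma mem_lattice_orthogonal {a : AddCircle (2 * Real.pi) → Matrix (Fin d) (Fin d) ℂ}
    {ha : ∀ i j, MemLp (fun t => a t i j) 2 μ𝕋} {k : ℤ}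
    {x : Lp (EuclideanSpace ℂ (Fin d)) 2 μ𝕋}
    (h : ∀ m j, k ≤ m → inner ℂ x (shiftCol a ha m j) = 0) : x ∈ (lattice a ha k)ᗮ := by
  refine mem_span_orthogonal ?_
  rintro _ ⟨m, j, hm, rfl⟩
  exact inner_eq_zero_symm.mp (h m j hm)

lemma inner_shiftCol_eq_zero {a : AddCircle (2 * Real.pi) → Matrix (Fin d) (Fin d) ℂ}
    {ha : ∀ i j, MemLp (fun t => a t i j) 2 μ𝕋} {k : ℤ}
    {x : Lp (EuclideanSpace ℂ (Fin d)) 2 μ𝕋} (hx : x ∈ (lattice a ha k)ᗮ) {m : ℤ} (hm : k ≤ m)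
    (j : Fin d) : inner ℂ x (shiftCol a ha m j) = 0 :=
  Submodule.inner_left_of_mem_orthogonal (K := lattice a ha k)
    (Submodule.subset_span ⟨m, j, hm, rfl⟩) hx

/-- If `x` is orthogonal to `z M` and `y ∈ M`, where `M` is the closed span of the
`z ^ m • a e_j`, `m ≥ 0`, then `x` is orthogonal to `z ^ m y` for `m ≥ 1`. Here `M` is
written as a double orthogonal complement. -/
lemma integral_shift_eq_zero {a : AddCircle (2 * Real.pi) → Matrix (Fin d) (Fin d) ℂ}
    {ha : ∀ i j, MemLp (fun t => a t i j) 2 μ𝕋}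
    {x y : Lp (EuclideanSpace ℂ (Fin d)) 2 μ𝕋} (hx : x ∈ (lattice a ha 1)ᗮ)
    (hy : y ∈ (lattice a ha 0)ᗮᗮ) {m : ℤ} (hm : 0 < m) :
    ∫ t, fourier m t * ∑ i, y t i * star (x t i) ∂μ𝕋 = 0 := by
  have hx' : vecL (fun t i => fourier (-m) t * x t i)
      (fun i => memLp_fourier_mul _ (memLp_coord x i)) ∈ (lattice a ha 0)ᗮ := by
    refine mem_lattice_orthogonal fun l j hl => ?_
    have h0 := inner_shiftCol_eq_zero hx (show 1 ≤ l + m by lia) j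
    unfold shiftCol at h0 ⊢
    rw [inner_vecL_right] at h0
    rw [inner_vecL_vecL, ← h0]
    congr 1
    ext t
    refine Finset.sum_congr rfl fun i _ => ?_
    rw [star_mul, star_fourier, neg_neg, fourier_add]
    ring
  have h1 := Submodule.inner_right_of_mem_orthogonal hx' hy
  rw [inner_vecL_left] at h1
  rw [← h1]
  congr 1
  ext t
  rw [Finset.mul_sum]
  refine Finset.sum_congr rfl fun i _ => ?_
  rw [star_mul, star_fourier, neg_neg]
  ring

lemma integrable_sum_mul_star (x y : Lp (EuclideanSpace ℂ (Fin d)) 2 μ𝕋) :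
    Integrable (fun t => ∑ i, y t i * star (x t i)) μ𝕋 :=
  integrable_finsetSum _ fun i _ =>
    (memLp_coord y i).integrable_mul (memLp_star (memLp_coord x i))

lemma integral_fourier_ne_zero {m : ℤ} (hm : m ≠ 0) :
    ∫ t, fourier m t ∂μ𝕋 = 0 := by
  have h := congrFun (fourierCoeff_fourier (T := 2 * Real.pi) 0) (-m)
  simpa [fourierCoeff, hm] using h

/-- The wandering subspace `M ⊖ z M` contains `d` orthonormal vectors: the components of the
`a e_j` orthogonal to `z M` are independent, since pairing with the rows of `b = a⁻¹`
annihilates `z M` and reproduces the identity matrix on the `a e_j`. -/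
lemma exists_orthonormal_wandering {a b : AddCircle (2 * Real.pi) → Matrix (Fin d) (Fin d) ℂ}
    (ha : ∀ i j, MemLp (fun t => a t i j) 2 μ𝕋) (hb : ∀ i j, MemLp (fun t => b t i j) 2 μ𝕋)
    (hba : ∀ t, b t * a t = 1) :
    ∃ θ : Fin d → Lp (EuclideanSpace ℂ (Fin d)) 2 μ𝕋, Orthonormal ℂ θ ∧
      ∀ j, θ j ∈ (lattice a ha 1)ᗮ ∧ θ j ∈ (lattice a ha 0)ᗮᗮ := by
  have hle : lattice a ha 1 ≤ lattice a ha 0 := by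
    refine Submodule.span_mono ?_
    rintro _ ⟨m, j, hm, rfl⟩
    exact ⟨m, j, by lia, rfl⟩
  have hdec : ∀ j, ∃ n ∈ (lattice a ha 1)ᗮᗮ, ∃ v ∈ (lattice a ha 1)ᗮ,
      shiftCol a ha 0 j = n + v := by
    intro j
    obtain ⟨v, hv, n, hn, h⟩ :=
      Submodule.exists_add_mem_mem_orthogonal (K := (lattice a ha 1)ᗮ) (shiftCol a ha 0 j)
    exact ⟨n, hn, v, hv, by rw [h, add_comm]⟩
  choose n hn v hv hnv using hdec
  have hvM : ∀ j, v j ∈ (lattice a ha 0)ᗮᗮ := by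
    intro j
    have h1 : shiftCol a ha 0 j ∈ (lattice a ha 0)ᗮᗮ :=
      Submodule.le_orthogonal_orthogonal _ (Submodule.subset_span ⟨0, j, le_rfl, rfl⟩)
    have h2 : n j ∈ (lattice a ha 0)ᗮᗮ :=
      Submodule.orthogonal_le (Submodule.orthogonal_le hle) (hn j)
    have h3 : v j = shiftCol a ha 0 j - n j := by rw [hnv j]; abel
    rw [h3]
    exact Submodule.sub_mem _ h1 h2
  let y : Fin d → Lp (EuclideanSpace ℂ (Fin d)) 2 μ𝕋 := fun i =>
    vecL (fun t l => star (b t i l)) fun l => memLp_star (hb i l)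
  have hy : ∀ i m j, inner ℂ (y i) (shiftCol a ha m j)
      = ∫ t, fourier m t * (1 : Matrix (Fin d) (Fin d) ℂ) i j ∂μ𝕋 := by
    intro i m j
    unfold y shiftCol
    rw [inner_vecL_vecL]
    congr 1
    ext t
    rw [← hba t, Matrix.mul_apply, Finset.mul_sum]
    refine Finset.sum_congr rfl fun l _ => ?_
    rw [star_star]
    ring
  have hyN : ∀ i, y i ∈ (lattice a ha 1)ᗮ := fun i =>
    mem_lattice_orthogonal fun m j hm => by
      rw [hy, integral_mul_const, integral_fourier_ne_zero (by lia), zero_mul]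
  have hyv : ∀ i j, inner ℂ (y i) (v j) = (1 : Matrix (Fin d) (Fin d) ℂ) i j := by
    intro i j
    have h1 := hy i 0 j
    rw [hnv j, inner_add_right, Submodule.inner_right_of_mem_orthogonal (hyN i) (hn j),
      zero_add] at h1
    rw [h1]
    simp
  have hli : LinearIndependent ℂ v := by
    rw [Fintype.linearIndependent_iff]
    intro c hc i
    have h1 : inner ℂ (y i) (∑ j, c j • v j) = 0 := by rw [hc, inner_zero_right]
    simpa [inner_sum, inner_smul_right, hyv, Matrix.one_apply] using h1
  have hspan : Submodule.span ℂ (Set.range v) ≤ (lattice a ha 1)ᗮ ⊓ (lattice a ha 0)ᗮᗮ :=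
    Submodule.span_le.mpr (by rintro _ ⟨j, rfl⟩; exact ⟨hv j, hvM j⟩)
  refine ⟨InnerProductSpace.gramSchmidtNormed ℂ v,
    InnerProductSpace.gramSchmidtNormed_orthonormal hli, fun j => ?_⟩
  have hmem : InnerProductSpace.gramSchmidtNormed ℂ v j ∈ Submodule.span ℂ (Set.range v) := by
    rw [← InnerProductSpace.span_gramSchmidt ℂ v]
    exact Submodule.smul_mem _ _ (Submodule.subset_span ⟨j, rfl⟩)
  exact hspan hmem

/-- The pointwise inner product of two elements of the wandering subspace `M ⊖ z M` is constant:
`integral_shift_eq_zero`, applied in both orders, kills its Fourier coefficients of nonzero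
index. -/
lemma ae_inner_eq_const {a : AddCircle (2 * Real.pi) → Matrix (Fin d) (Fin d) ℂ}
    {ha : ∀ i j, MemLp (fun t => a t i j) 2 μ𝕋}
    {x y : Lp (EuclideanSpace ℂ (Fin d)) 2 μ𝕋}
    (hx : x ∈ (lattice a ha 1)ᗮ ∧ x ∈ (lattice a ha 0)ᗮᗮ)
    (hy : y ∈ (lattice a ha 1)ᗮ ∧ y ∈ (lattice a ha 0)ᗮᗮ) :
    ∀ᵐ t ∂μ𝕋, ∑ i, y t i * star (x t i) = inner ℂ x y := by
  have hint := integrable_sum_mul_star x y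
  have key := ae_eq_zero_of_fourier
    (F := fun t => ∑ i, y t i * star (x t i) - inner ℂ x y)
    (hint.sub (integrable_const _)) ?_
  · filter_upwards [key] with t ht
    exact sub_eq_zero.mp ht
  intro m
  have hmul : Integrable (fun t => fourier m t * ∑ i, y t i * star (x t i)) μ𝕋 :=
    hint.bdd_mul (fourier m).continuous.aestronglyMeasurable (c := 1)
      (Eventually.of_forall fun t => (norm_fourier_apply m t).le)
  have hone : Integrable (fun t => fourier m t * inner ℂ x y) μ𝕋 :=
    (integrable_const (inner ℂ x y)).bdd_mul (fourier m).continuous.aestronglyMeasurable (c := 1)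
      (Eventually.of_forall fun t => (norm_fourier_apply m t).le)
  simp only [mul_sub]
  rw [integral_sub hmul hone, integral_mul_const]
  rcases lt_trichotomy m 0 with hm | rfl | hm
  · rw [integral_fourier_ne_zero hm.ne, zero_mul, sub_zero]
    have h1 := integral_shift_eq_zero hy.1 hx.2 (neg_pos.mpr hm)
    have h2 := congrArg (starRingEnd ℂ) h1
    rw [← integral_conj, map_zero] at h2
    rw [← h2]
    congr 1
    ext t
    simp [mul_comm]
  · simp [inner_L2]
  · rw [integral_fourier_ne_zero hm.ne', zero_mul, sub_zero]
    exact integral_shift_eq_zero hx.1 hy.2 hm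

/-- Spectral factorization: if `a` and its inverse `b` have square integrable entries, there is
an a.e. unitary `Θ` such that `Θᴴ a` is analytic, and `C Θ` is analytic whenever `C` is square
integrable and `C a` is analytic. The columns of `Θ` are an orthonormal family in the wandering
subspace. -/
lemma exists_unitary_factor {a b : AddCircle (2 * Real.pi) → Matrix (Fin d) (Fin d) ℂ}
    (ha : ∀ i j, MemLp (fun t => a t i j) 2 μ𝕋) (hb : ∀ i j, MemLp (fun t => b t i j) 2 μ𝕋)
    (hba : ∀ t, b t * a t = 1) :
    ∃ Θ : AddCircle (2 * Real.pi) → Matrix (Fin d) (Fin d) ℂ,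
      (∀ i j, MemLp (fun t => Θ t i j) 2 μ𝕋) ∧
      (∀ᵐ t ∂μ𝕋, (Θ t)ᴴ * Θ t = 1) ∧
      (∀ m : ℤ, 0 < m → ∀ i j, ∫ t, fourier m t * ((Θ t)ᴴ * a t) i j ∂μ𝕋 = 0) ∧
      ∀ C : AddCircle (2 * Real.pi) → Matrix (Fin d) (Fin d) ℂ,
        (∀ i j, MemLp (fun t => C t i j) 2 μ𝕋) →
        (∀ m : ℤ, 0 < m → ∀ i j, ∫ t, fourier m t * (C t * a t) i j ∂μ𝕋 = 0) →
        ∀ m : ℤ, 0 < m → ∀ i j, ∫ t, fourier m t * (C t * Θ t) i j ∂μ𝕋 = 0 := by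
  obtain ⟨θ, hθ, hmem⟩ := exists_orthonormal_wandering ha hb hba
  refine ⟨fun t => Matrix.of fun i j => θ j t i, fun i j => memLp_coord (θ j) i, ?_, ?_, ?_⟩
  · have h : ∀ᵐ t ∂μ𝕋, ∀ i j, ∑ l, θ j t l * star (θ i t l) = inner ℂ (θ i) (θ j) := by
      rw [ae_all_iff]; intro i
      rw [ae_all_iff]; intro j
      exact ae_inner_eq_const (hmem i) (hmem j)
    filter_upwards [h] with t ht
    ext i j
    have h1 := orthonormal_iff_ite.mp hθ i j
    rw [Matrix.one_apply, ← h1, ← ht i j, Matrix.mul_apply]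
    refine Finset.sum_congr rfl fun l _ => ?_
    simp [mul_comm]
  · intro m hm i j
    have h1 := inner_shiftCol_eq_zero (hmem i).1 (show 1 ≤ m by lia) j
    unfold shiftCol at h1
    rw [inner_vecL_right] at h1
    rw [← h1]
    congr 1
    ext t
    rw [Matrix.mul_apply, Finset.mul_sum]
    refine Finset.sum_congr rfl fun l _ => ?_
    simp
    ring
  · intro C hC hCa m hm i j
    have hx : vecL (fun t l => star (C t i l)) (fun l => memLp_star (hC i l))
        ∈ (lattice a ha 1)ᗮ := by
      refine mem_lattice_orthogonal fun l k hl => ?_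
      unfold shiftCol
      rw [inner_vecL_vecL, ← hCa l (by lia) i k]
      congr 1
      ext t
      rw [Matrix.mul_apply, Finset.mul_sum]
      refine Finset.sum_congr rfl fun l _ => ?_
      rw [star_star]
      ring
    rw [← integral_shift_eq_zero hx (hmem j).2 hm]
    refine integral_congr_ae ?_
    filter_upwards [coeFn_vecL (fun t l => star (C t i l)) (fun l => memLp_star (hC i l))]
      with t ht
    simp only [ht, Matrix.mul_apply, star_star, Matrix.of_apply]
    congr 1
    refine Finset.sum_congr rfl fun l _ => ?_
    ring

end Hilbert

/-! ### The factorization -/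

section Cutoff

variable {d : ℕ}

/-- The function with `cutoff δ (|A| ^ 2) = max (|A|, δ)`. -/
noncomputable def cutoff (δ x : ℝ) : ℝ := max (√x) δ

lemma cutoff_pos {δ : ℝ} (hδ : 0 < δ) (x : ℝ) : 0 < cutoff δ x := lt_max_of_lt_right hδ

lemma continuous_cutoff (δ : ℝ) : Continuous (cutoff δ) := by
  unfold cutoff
  fun_prop

lemma continuous_sqrt_cutoff (δ : ℝ) : Continuous fun x => √(cutoff δ x) :=
  (continuous_cutoff δ).sqrt

lemma continuous_inv_sqrt_cutoff {δ : ℝ} (hδ : 0 < δ) :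
    Continuous fun x => (√(cutoff δ x))⁻¹ :=
  (continuous_sqrt_cutoff δ).inv₀ fun x => (Real.sqrt_pos.mpr (cutoff_pos hδ x)).ne'

/-- `max (|A|, δ) ^ (1/2)`. -/
noncomputable def rootMod (δ : ℝ) (A : Matrix (Fin d) (Fin d) ℂ) : Matrix (Fin d) (Fin d) ℂ :=
  cfc (fun x => √(cutoff δ x)) (Aᴴ * A)

/-- `max (|A|, δ) ^ (-1/2)`. -/
noncomputable def invRootMod (δ : ℝ) (A : Matrix (Fin d) (Fin d) ℂ) :
    Matrix (Fin d) (Fin d) ℂ :=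
  cfc (fun x => (√(cutoff δ x))⁻¹) (Aᴴ * A)

lemma conjTranspose_rootMod (δ : ℝ) (A : Matrix (Fin d) (Fin d) ℂ) :
    (rootMod δ A)ᴴ = rootMod δ A := isHermitian_cfc _ _

lemma conjTranspose_invRootMod (δ : ℝ) (A : Matrix (Fin d) (Fin d) ℂ) :
    (invRootMod δ A)ᴴ = invRootMod δ A := isHermitian_cfc _ _

lemma rootMod_mul_self {δ : ℝ} (hδ : 0 < δ) (A : Matrix (Fin d) (Fin d) ℂ) :
    rootMod δ A * rootMod δ A = cfc (cutoff δ) (Aᴴ * A) := by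
  unfold rootMod
  rw [← cfc_mul _ _ _ (continuous_sqrt_cutoff δ).continuousOn
    (continuous_sqrt_cutoff δ).continuousOn]
  congr 1
  ext x
  exact Real.mul_self_sqrt (cutoff_pos hδ x).le

lemma invRootMod_mul_self {δ : ℝ} (hδ : 0 < δ) (A : Matrix (Fin d) (Fin d) ℂ) :
    invRootMod δ A * invRootMod δ A = cfc (fun x => (cutoff δ x)⁻¹) (Aᴴ * A) := by
  unfold invRootMod
  rw [← cfc_mul _ _ _ (continuous_inv_sqrt_cutoff hδ).continuousOn
    (continuous_inv_sqrt_cutoff hδ).continuousOn]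
  congr 1
  ext x
  rw [← mul_inv, Real.mul_self_sqrt (cutoff_pos hδ x).le]

lemma invRootMod_mul_rootMod {δ : ℝ} (hδ : 0 < δ) (A : Matrix (Fin d) (Fin d) ℂ) :
    invRootMod δ A * rootMod δ A = 1 := by
  have hB : IsSelfAdjoint (Aᴴ * A) := isHermitian_conjTranspose_mul_self A
  unfold invRootMod rootMod
  rw [← cfc_mul _ _ _ (continuous_inv_sqrt_cutoff hδ).continuousOn
    (continuous_sqrt_cutoff δ).continuousOn]
  rw [← cfc_const_one ℝ (Aᴴ * A)]
  congr 1
  ext x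
  exact inv_mul_cancel₀ (Real.sqrt_pos.mpr (cutoff_pos hδ x)).ne'

lemma invRootMod_mul_mul {δ : ℝ} (hδ : 0 < δ) (A : Matrix (Fin d) (Fin d) ℂ) :
    invRootMod δ A * (Aᴴ * A) * invRootMod δ A
      = cfc (fun x => x / cutoff δ x) (Aᴴ * A) := by
  have hB : IsSelfAdjoint (Aᴴ * A) := isHermitian_conjTranspose_mul_self A
  have hc := continuous_inv_sqrt_cutoff hδ
  have hid : (Aᴴ * A) = cfc (fun x : ℝ => x) (Aᴴ * A) := (cfc_id' ℝ (Aᴴ * A)).symm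
  unfold invRootMod
  conv_lhs => enter [1, 2]; rw [hid]
  rw [← cfc_mul _ (fun x => x) _ hc.continuousOn continuous_id'.continuousOn,
    ← cfc_mul (fun x => (√(cutoff δ x))⁻¹ * x) _ _
      (hc.mul continuous_id').continuousOn hc.continuousOn]
  congr 1
  ext x
  rw [mul_right_comm, ← mul_inv, Real.mul_self_sqrt (cutoff_pos hδ x).le, div_eq_inv_mul]

lemma div_cutoff_nonneg {δ x : ℝ} (hδ : 0 < δ) (hx : 0 ≤ x) : 0 ≤ x / cutoff δ x :=
  div_nonneg hx (cutoff_pos hδ x).le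

lemma div_cutoff_le {δ x : ℝ} (hδ : 0 < δ) (hx : 0 ≤ x) : x / cutoff δ x ≤ √x := by
  rw [div_le_iff₀ (cutoff_pos hδ x)]
  calc x = √x * √x := (Real.mul_self_sqrt hx).symm
    _ ≤ _ := by
      gcongr
      exact le_max_left _ _

/-- A measurable matrix function `D` with `Dᴴ * D = c(fᴴ * f)`, `c x ≤ K + √x`, is square
integrable when `f` is integrable. -/
lemma memLp_two_of_cfc {f D : AddCircle (2 * Real.pi) → Matrix (Fin d) (Fin d) ℂ}
    (hf : ∀ i j, Integrable (fun t => f t i j) μ𝕋)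
    (hD : ∀ i j, AEStronglyMeasurable (fun t => D t i j) μ𝕋) {c : ℝ → ℝ} {K : ℝ}
    (hDc : ∀ t, (D t)ᴴ * D t = cfc c ((f t)ᴴ * f t)) (hc : ∀ x, 0 ≤ x → c x ≤ K + √x)
    (i j : Fin d) : MemLp (fun t => D t i j) 2 μ𝕋 := by
  rw [memLp_two_iff_integrable_sq_norm (hD i j)]
  have hdom : Integrable (fun t => d * (K + ∑ j, ∑ i, ‖f t i j‖)) μ𝕋 :=
    ((integrable_const K).add (integrable_finsetSum _ fun j _ =>
      integrable_finsetSum _ fun i _ => (hf i j).norm)).const_mul _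
  refine hdom.mono' ((hD i j).norm.pow 2) (Eventually.of_forall fun t => ?_)
  rw [Real.norm_of_nonneg (by positivity)]
  exact norm_entry_sq_le (hDc t) hc i j

lemma aestronglyMeasurable_matrix {f : AddCircle (2 * Real.pi) → Matrix (Fin d) (Fin d) ℂ}
    (hf : ∀ i j, Integrable (fun t => f t i j) μ𝕋) : AEStronglyMeasurable f μ𝕋 := by
  have h : AEMeasurable (fun t => (fun i j => f t i j : Fin d → Fin d → ℂ)) μ𝕋 :=
    aemeasurable_pi_lambda _ fun i => aemeasurable_pi_lambda _ fun j => (hf i j).1.aemeasurable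
  exact h.aestronglyMeasurable

lemma integrable_matrix_mul {A B : AddCircle (2 * Real.pi) → Matrix (Fin d) (Fin d) ℂ}
    (hA : ∀ i j, MemLp (fun t => A t i j) 2 μ𝕋) (hB : ∀ i j, MemLp (fun t => B t i j) 2 μ𝕋)
    (i j : Fin d) : Integrable (fun t => (A t * B t) i j) μ𝕋 := by
  simp only [Matrix.mul_apply]
  exact integrable_finsetSum _ fun l _ => (hA i l).integrable_mul (hB l j)

end Cutoff

lemma IsOrliczFunction.exists_small {Φ : ℝ → ℝ} (hΦ : IsOrliczFunction Φ) (d : ℕ) {ε : ℝ}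
    (hε : 0 < ε) : ∃ δ, 0 < δ ∧ d * Φ δ ≤ ε := by
  have h0 : Tendsto (fun x => d * Φ x) (nhdsWithin 0 (Set.Ioi 0)) (nhds (d * Φ 0)) :=
    (((hΦ.continuousOn 0 Set.self_mem_Ici).mono Set.Ioi_subset_Ici_self).tendsto).const_mul _
  rw [hΦ.map_zero, mul_zero] at h0
  obtain ⟨δ, h1, h2⟩ := ((h0.eventually_lt_const hε).and self_mem_nhdsWithin).exists
  exact ⟨δ, h2, h1.le⟩

lemma IsOrliczFunction.nonneg {Φ : ℝ → ℝ} (hΦ : IsOrliczFunction Φ) {x : ℝ} (hx : 0 ≤ x) :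
    0 ≤ Φ x := by
  have := hΦ.monotoneOn Set.self_mem_Ici (Set.mem_Ici.mpr hx) hx
  rwa [hΦ.map_zero] at this

lemma IsOrliczFunction.map_cutoff_le {Φ : ℝ → ℝ} (hΦ : IsOrliczFunction Φ) {δ : ℝ} (hδ : 0 < δ)
    (x : ℝ) : Φ (cutoff δ x) ≤ Φ (√x) + Φ δ := by
  have h1 := hΦ.nonneg hδ.le
  have h2 := hΦ.nonneg (Real.sqrt_nonneg x)
  unfold cutoff
  rcases max_choice (√x) δ with h | h <;> rw [h] <;> linarith

/-- Riesz-type factorization in matrix-valued Orlicz–Hardy spaces on the circle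
(`𝕋 = ℝ / 2πℤ` with normalized Haar measure): if `f` is analytic (negative Fourier
coefficients vanish entrywise) and `∫ Tr Φ(|f|) dm < ∞`, then for every `ε > 0` there is a
factorization `f = g h` a.e. with `g, h` analytic and
`max(∫ Tr Φ(g*g) dm, ∫ Tr Φ(h h*) dm) ≤ ∫ Tr Φ(|f|) dm + ε`. -/
theorem phi_moment_riesz_factorization
    (Φ : ℝ → ℝ) (hΦ : IsOrliczFunction Φ)
    (p q C₀ : ℝ) (hp : 1 < p) (hpq : p ≤ q) (hC₀ : 0 < C₀)
    (hlow : OrliczLowerIndex Φ p C₀) (hupp : OrliczUpperIndex Φ q C₀)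
    (d : ℕ) (hd : 1 ≤ d)
    (f : AddCircle (2 * Real.pi) → Matrix (Fin d) (Fin d) ℂ)
    (hf_int : ∀ i j, Integrable (fun t => f t i j) AddCircle.haarAddCircle)
    (hf_fin : (∫⁻ t, ENNReal.ofReal (trPhiAbs Φ (f t)) ∂AddCircle.haarAddCircle) < ⊤)
    (hf_analytic : ∀ k : ℤ, k < 0 → ∀ i j, fourierCoeff (fun t => f t i j) k = 0)
    (ε : ℝ) (hε : 0 < ε) :
    ∃ g h : AddCircle (2 * Real.pi) → Matrix (Fin d) (Fin d) ℂ,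
      (∀ i j, Integrable (fun t => g t i j) AddCircle.haarAddCircle) ∧
      (∀ i j, Integrable (fun t => h t i j) AddCircle.haarAddCircle) ∧
      (∀ k : ℤ, k < 0 → ∀ i j, fourierCoeff (fun t => g t i j) k = 0) ∧
      (∀ k : ℤ, k < 0 → ∀ i j, fourierCoeff (fun t => h t i j) k = 0) ∧
      (∀ᵐ t ∂(AddCircle.haarAddCircle (T := 2 * Real.pi)), f t = g t * h t) ∧
      max (∫⁻ t, ENNReal.ofReal (trPhiHerm Φ ((g t)ᴴ * g t)) ∂AddCircle.haarAddCircle)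
          (∫⁻ t, ENNReal.ofReal (trPhiHerm Φ (h t * (h t)ᴴ)) ∂AddCircle.haarAddCircle) ≤
        (∫⁻ t, ENNReal.ofReal (trPhiAbs Φ (f t)) ∂AddCircle.haarAddCircle) +
          ENNReal.ofReal ε := by
  obtain ⟨δ, hδ, hδε⟩ := hΦ.exists_small d hε
  have hfm := aestronglyMeasurable_matrix hf_int
  have hentry : ∀ i j, Continuous fun M : Matrix (Fin d) (Fin d) ℂ => M i j := fun i j => by
    fun_prop
  have hroot : Continuous (rootMod δ : Matrix (Fin d) (Fin d) ℂ → _) :=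
    continuous_cfc_conjTranspose_mul_self _ (continuous_sqrt_cutoff δ)
  have hinv : Continuous (invRootMod δ : Matrix (Fin d) (Fin d) ℂ → _) :=
    continuous_cfc_conjTranspose_mul_self _ (continuous_inv_sqrt_cutoff hδ)
  have hfb : ∀ t, (f t * invRootMod δ (f t))ᴴ * (f t * invRootMod δ (f t))
      = cfc (fun x => x / cutoff δ x) ((f t)ᴴ * f t) := fun t => by
    rw [← invRootMod_mul_mul hδ, conjTranspose_mul, conjTranspose_invRootMod]
    simp only [Matrix.mul_assoc]
  have ha2 : ∀ i j, MemLp (fun t => rootMod δ (f t) i j) 2 AddCircle.haarAddCircle :=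
    memLp_two_of_cfc (c := cutoff δ) (K := δ) hf_int
      (fun i j => ((hentry i j).comp hroot).comp_aestronglyMeasurable hfm)
      (fun t => by rw [conjTranspose_rootMod, rootMod_mul_self hδ])
      (fun x _ => max_le (by linarith) (by linarith [Real.sqrt_nonneg x]))
  have hb2 : ∀ i j, MemLp (fun t => invRootMod δ (f t) i j) 2 AddCircle.haarAddCircle :=
    memLp_two_of_cfc (c := fun x => (cutoff δ x)⁻¹) (K := δ⁻¹) hf_int
      (fun i j => ((hentry i j).comp hinv).comp_aestronglyMeasurable hfm)
      (fun t => by rw [conjTranspose_invRootMod, invRootMod_mul_self hδ])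
      (fun x _ => (inv_anti₀ hδ (le_max_right _ _)).trans
        (by linarith [Real.sqrt_nonneg x]))
  have hc2 : ∀ i j, MemLp (fun t => (f t * invRootMod δ (f t)) i j) 2
      AddCircle.haarAddCircle :=
    memLp_two_of_cfc (c := fun x => x / cutoff δ x) (K := 0) hf_int
      (fun i j => ((hentry i j).comp
        (continuous_id.matrix_mul hinv)).comp_aestronglyMeasurable hfm)
      hfb (fun x hx => by rw [zero_add]; exact div_cutoff_le hδ hx)
  obtain ⟨Θ, hΘ2, hΘ, hΘa, hΘC⟩ :=
    exists_unitary_factor ha2 hb2 (fun t => invRootMod_mul_rootMod hδ (f t))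
  have hΘs : ∀ i j, MemLp (fun t => (Θ t)ᴴ i j) 2 AddCircle.haarAddCircle := fun i j =>
    memLp_star (hΘ2 j i)
  refine ⟨fun t => f t * invRootMod δ (f t) * Θ t, fun t => (Θ t)ᴴ * rootMod δ (f t),
    integrable_matrix_mul hc2 hΘ2, integrable_matrix_mul hΘs ha2, ?_, ?_, ?_, ?_⟩
  · intro k hk i j
    refine hΘC _ hc2 (fun m hm i j => ?_) (-k) (by lia) i j
    have h1 := hf_analytic (-m) (by lia) i j
    simpa [fourierCoeff, Matrix.mul_assoc, invRootMod_mul_rootMod hδ] using h1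
  · intro k hk i j
    exact hΘa (-k) (by lia) i j
  · filter_upwards [hΘ] with t ht
    calc f t = f t * (invRootMod δ (f t) * rootMod δ (f t)) := by
          rw [invRootMod_mul_rootMod hδ, Matrix.mul_one]
      _ = f t * invRootMod δ (f t) * (Θ t * (Θ t)ᴴ) * rootMod δ (f t) := by
          rw [mul_eq_one_comm.mp ht, Matrix.mul_one, Matrix.mul_assoc]
      _ = _ := by simp only [Matrix.mul_assoc]
  · refine max_le ?_ ?_
    · refine le_trans (lintegral_mono_ae ?_) le_self_add
      filter_upwards [hΘ] with t ht
      refine ENNReal.ofReal_le_ofReal ?_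
      have h1 : (f t * invRootMod δ (f t) * Θ t)ᴴ * (f t * invRootMod δ (f t) * Θ t)
          = (Θ t)ᴴ * cfc (fun x => x / cutoff δ x) ((f t)ᴴ * f t) * Θ t := by
        rw [← hfb, conjTranspose_mul _ (Θ t)]
        simp only [Matrix.mul_assoc]
      rw [h1, trPhiHerm_conj_cfc (isHermitian_conjTranspose_mul_self (f t)) ht, trPhiAbs_eq]
      refine Finset.sum_le_sum fun i _ => ?_
      have hx := eigenvalues_nonneg (f t) i
      exact hΦ.monotoneOn (Set.mem_Ici.mpr (div_cutoff_nonneg hδ hx))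
        (Set.mem_Ici.mpr (Real.sqrt_nonneg _)) (div_cutoff_le hδ hx)
    · have hconst : ENNReal.ofReal ε
          = ∫⁻ _, ENNReal.ofReal ε ∂(AddCircle.haarAddCircle (T := 2 * Real.pi)) := by simp
      rw [hconst, ← lintegral_add_right _ measurable_const]
      refine lintegral_mono_ae ?_
      filter_upwards [hΘ] with t ht
      have h1 : ((Θ t)ᴴ * rootMod δ (f t)) * ((Θ t)ᴴ * rootMod δ (f t))ᴴ
          = (Θ t)ᴴ * cfc (cutoff δ) ((f t)ᴴ * f t) * Θ t := by
        rw [← rootMod_mul_self hδ, conjTranspose_mul, conjTranspose_conjTranspose,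
          conjTranspose_rootMod]
        simp only [Matrix.mul_assoc]
      have h2 : trPhiHerm Φ (((Θ t)ᴴ * rootMod δ (f t)) * ((Θ t)ᴴ * rootMod δ (f t))ᴴ)
          ≤ trPhiAbs Φ (f t) + ε := by
        rw [h1, trPhiHerm_conj_cfc (isHermitian_conjTranspose_mul_self (f t)) ht, trPhiAbs_eq]
        calc _ ≤ ∑ i, (Φ (√((isHermitian_conjTranspose_mul_self (f t)).eigenvalues i)) + Φ δ) :=
              Finset.sum_le_sum fun i _ => hΦ.map_cutoff_le hδ _
          _ ≤ _ := by
              rw [Finset.sum_add_distrib]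
              simpa using hδε
      exact (ENNReal.ofReal_le_ofReal h2).trans ENNReal.ofReal_add_le
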